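/- Let α, β ∈ ℂ be both nonzero and satisfy α·conj(α) + β·conj(β) = 1 and α·conj(β) + β·conj(α) = 0. Then there exist real numbers t and θ such that α = e^{it}·cos θ and β = i·e^{it}·sin θ. -/

import Mathlib

open Complex

/-!
Adding and subtracting the two conditions shows that `α + β` and `α - β` are unimodular, say
`α + β = e^{ia}` and `α - β = e^{ib}` with `a`, `b` real. Half the sum and half the difference of
these exponentials are `e^{it} cos θ` and `i e^{it} sin θ`, with `t` the mean of `a` and `b` and
`θ` half their difference.
-/

section RCLike

variable {K : Type*} [RCLike K]

theorem mul_conj_eq_one_iff_norm_eq_one {z : K} : z * starRingEnd K z = 1 ↔ ‖z‖ = 1 := by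
  rw [RCLike.mul_conj]
  norm_cast
  exact pow_eq_one_iff_of_nonneg (norm_nonneg z) two_ne_zero

theorem norm_add_eq_one_and_norm_sub_eq_one_iff {z w : K} :
    ‖z + w‖ = 1 ∧ ‖z - w‖ = 1 ↔
      z * starRingEnd K z + w * starRingEnd K w = 1 ∧
        z * starRingEnd K w + w * starRingEnd K z = 0 := by
  simp only [← mul_conj_eq_one_iff_norm_eq_one, map_add, map_sub]
  constructor <;> rintro ⟨h₁, h₂⟩ <;> constructor
  · linear_combination (h₁ + h₂) / 2
  · linear_combination (h₁ - h₂) / 2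
  · linear_combination h₁ + h₂
  · linear_combination h₁ - h₂

end RCLike

theorem exp_mul_I_add_exp_mul_I (x y : ℂ) :
    exp (x * I) + exp (y * I) = 2 * exp ((x + y) / 2 * I) * cos ((x - y) / 2) := by
  calc exp (x * I) + exp (y * I)
      = exp ((x + y) / 2 * I) * (exp ((x - y) / 2 * I) + exp (-((x - y) / 2) * I)) := by
        rw [mul_add, ← exp_add, ← exp_add]
        ring_nf
    _ = 2 * exp ((x + y) / 2 * I) * cos ((x - y) / 2) := by
        rw [← two_cos, mul_left_comm, mul_assoc]

theorem two_mul_I_mul_sin (x : ℂ) : 2 * I * sin x = exp (x * I) - exp (-x * I) := by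
  linear_combination I * two_sin x + (exp (-x * I) - exp (x * I)) * I_mul_I

theorem exp_mul_I_sub_exp_mul_I (x y : ℂ) :
    exp (x * I) - exp (y * I) = 2 * I * exp ((x + y) / 2 * I) * sin ((x - y) / 2) := by
  calc exp (x * I) - exp (y * I)
      = exp ((x + y) / 2 * I) * (exp ((x - y) / 2 * I) - exp (-((x - y) / 2) * I)) := by
        rw [mul_sub, ← exp_add, ← exp_add]
        ring_nf
    _ = 2 * I * exp ((x + y) / 2 * I) * sin ((x - y) / 2) := by
        rw [← two_mul_I_mul_sin]
        ring

/-- If α, β are nonzero with α·conj(α) + β·conj(β) = 1 and α·conj(β) + β·conj(α) = 0,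
then α = e^{it}·cos θ and β = i·e^{it}·sin θ for some real t, θ. -/
theorem polar_form_of_unitarity_conditions (α β : ℂ) (hα : α ≠ 0) (hβ : β ≠ 0)
    (h1 : α * starRingEnd ℂ α + β * starRingEnd ℂ β = 1)
    (h2 : α * starRingEnd ℂ β + β * starRingEnd ℂ α = 0) :
    ∃ t θ : ℝ, α = Complex.exp (Complex.I * t) * (Real.cos θ : ℂ) ∧
      β = Complex.I * Complex.exp (Complex.I * t) * (Real.sin θ : ℂ) := by
  obtain ⟨h_add, h_sub⟩ := norm_add_eq_one_and_norm_sub_eq_one_iff.mpr ⟨h1, h2⟩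
  obtain ⟨a, ha⟩ := (norm_eq_one_iff _).mp h_add
  obtain ⟨b, hb⟩ := (norm_eq_one_iff _).mp h_sub
  refine ⟨(a + b) / 2, (a - b) / 2, ?_, ?_⟩ <;> push_cast <;> rw [mul_comm I (_ / 2)]
  · linear_combination (exp_mul_I_add_exp_mul_I a b - ha - hb) / 2
  · linear_combination (exp_mul_I_sub_exp_mul_I a b - ha + hb) / 2
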